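/- Let D be a weakly connected directed graph. Then h*_{Q̃_D} = h*_{Q̃_{D−e}} if and only if e is a loop, a bridge, or there is another edge of D parallel to e (same tail and head). -/

import Mathlib

open Finset Pointwise

noncomputable section

variable {V E ι : Type*}

/-- The vector `x_f ∈ ℝ^V` of an edge `f` with tail `t f` and head `h f`:
`+1` at the head, `-1` at the tail, `0` elsewhere (so `0` for a loop). -/
def xvec [DecidableEq V] (t h : E → V) (f : E) : V → ℝ :=
  fun v => (if v = h f then 1 else 0) - (if v = t f then 1 else 0)

/-- The extended root polytope of the subgraph with edge set `S`:
`conv({0} ∪ {x_f : f ∈ S})`. -/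
def rootPolyOn [DecidableEq V] (t h : E → V) (S : Set E) : Set (V → ℝ) :=
  convexHull ℝ ({0} ∪ (xvec t h '' S))

/-- The underlying (simple) undirected graph of the edges in `S`. -/
def underlyingOn (t h : E → V) (S : Set E) : SimpleGraph V :=
  SimpleGraph.fromRel (fun u v => ∃ f ∈ S, t f = u ∧ h f = v)

/-- A spanning tree: a set of edges whose underlying graph is connected and which
has `|V| - 1` edges. -/
def IsSpanningTree [Fintype V] (t h : E → V) (T : Finset E) : Prop :=
  (underlyingOn t h ↑T).Connected ∧ T.card + 1 = Fintype.card V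

/-- The number of lattice points of the `k`-th dilate of `Q`. -/
def latCount [Fintype ι] (Q : Set (ι → ℝ)) (k : ℕ) : ℕ :=
  Nat.card {p : ι → ℤ // (fun i => (p i : ℝ)) ∈ (k : ℝ) • Q}

/-- The Ehrhart series of `Q` as a formal power series. -/
def ehrSeries [Fintype ι] (Q : Set (ι → ℝ)) : PowerSeries ℤ :=
  PowerSeries.mk fun k => (latCount Q k : ℤ)

/-- The dimension of a polytope: the rank of its vector span. -/
def pdim (Q : Set (ι → ℝ)) : ℕ := Module.finrank ℝ ↥(vectorSpan ℝ Q)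

/-- `p` is the `h^*`-polynomial of `Q`: `(1-t)^{dim Q + 1} · Ehr_Q(t) = p(t)`. -/
def IsHStar [Fintype ι] (Q : Set (ι → ℝ)) (p : Polynomial ℤ) : Prop :=
  (1 - PowerSeries.X) ^ (pdim Q + 1) * ehrSeries Q = PowerSeries.mk fun i => p.coeff i

/-- The `±1` vector of a signed cycle with positive arc `Cp` and negative arc `Cm`. -/
def chiVec [DecidableEq E] (Cp Cm : Finset E) : E → ℝ :=
  fun f => (if f ∈ Cp then 1 else 0) - (if f ∈ Cm then 1 else 0)

/-- A circulation: an assignment of reals to edges with zero net flow at each vertex. -/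
def IsCirculation [Fintype E] [DecidableEq V] (t h : E → V) (φ : E → ℝ) : Prop :=
  ∑ f, φ f • xvec t h f = 0

/-- `(Cp, Cm)` is a signed cycle: the arcs are disjoint, the union is nonempty, the
`±1` vector is a circulation, and the support `Cp ∪ Cm` is minimal among supports of
nonzero circulations (i.e. it is a circuit of the graphic oriented matroid). -/
def IsSignedCycle [Fintype E] [DecidableEq E] [DecidableEq V] (t h : E → V)
    (Cp Cm : Finset E) : Prop :=
  Disjoint Cp Cm ∧ (Cp ∪ Cm).Nonempty ∧ IsCirculation t h (chiVec Cp Cm) ∧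
    ∀ φ : E → ℝ, IsCirculation t h φ → φ ≠ 0 →
      (∀ f, φ f ≠ 0 → f ∈ Cp ∪ Cm) → ∀ f ∈ Cp ∪ Cm, φ f ≠ 0

/-- A circuit signature: a choice, for each cycle, of exactly one of its two
orientations. -/
def IsCircuitSignature [Fintype E] [DecidableEq E] [DecidableEq V] (t h : E → V)
    (σ : Set (Finset E × Finset E)) : Prop :=
  (∀ q ∈ σ, IsSignedCycle t h q.1 q.2) ∧
    ∀ Cp Cm : Finset E, IsSignedCycle t h Cp Cm → ((Cp, Cm) ∈ σ ↔ (Cm, Cp) ∉ σ)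

/-- Acyclicity of a circuit signature: no nontrivial nonnegative combination of the
vectors of the chosen signed cycles vanishes. -/
def IsAcyclicSig [DecidableEq E] (σ : Set (Finset E × Finset E)) : Prop :=
  ∀ (s : Finset (Finset E × Finset E)) (a : Finset E × Finset E → ℝ),
    ↑s ⊆ σ → (∀ q, 0 ≤ a q) → (∃ q ∈ s, a q ≠ 0) →
      ∑ q ∈ s, a q • chiVec q.1 q.2 ≠ 0

/-- A weight function is generic if the two arcs of every cycle have different
total weights. -/
def GenericWeight [Fintype E] [DecidableEq E] [DecidableEq V] (t h : E → V)
    (w : E → ℝ) : Prop :=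
  ∀ Cp Cm : Finset E, IsSignedCycle t h Cp Cm → ∑ f ∈ Cp, w f ≠ ∑ f ∈ Cm, w f

/-- The circuit signature `cir^w`: orient each cycle so that the positive arc has
the larger total `w`-weight. -/
def cirw [Fintype E] [DecidableEq E] [DecidableEq V] (t h : E → V) (w : E → ℝ) :
    Set (Finset E × Finset E) :=
  {q | IsSignedCycle t h q.1 q.2 ∧ ∑ f ∈ q.2, w f < ∑ f ∈ q.1, w f}

/-- `tree(D,σ)`: spanning trees `T` such that every non-tree edge `f` lies in the
positive arc of the (σ-oriented) fundamental cycle of `f`, i.e. of the unique cycle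
contained in `T ∪ {f}`. -/
def treeSet [Fintype V] [Fintype E] [DecidableEq V] [DecidableEq E] (t h : E → V)
    (σ : Set (Finset E × Finset E)) : Set (Finset E) :=
  {T | IsSpanningTree t h T ∧
    ∀ f ∉ T, ∀ Cp Cm : Finset E, (Cp, Cm) ∈ σ → Cp ∪ Cm ⊆ insert f T → f ∈ Cp}

/-- `F` is a face of `Q`: the locus where some linear functional bounded above on `Q`
attains its maximum. -/
def IsFaceOf (Q F : Set (ι → ℝ)) : Prop :=
  ∃ (l : (ι → ℝ) →ₗ[ℝ] ℝ) (c : ℝ), (∀ y ∈ Q, l y ≤ c) ∧ F = {y ∈ Q | l y = c}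

/-- `F` is a facet of `Q`: a face of codimension one. -/
def IsFacetOf (Q F : Set (ι → ℝ)) : Prop :=
  IsFaceOf Q F ∧ pdim F + 1 = pdim Q

end


theorem finite_deg {n : ℕ} (M : Set (Fin n → ℕ)) (k : ℕ) :
    {m | m ∈ M ∧ ∑ i, m i = k}.Finite := by
  refine Set.Finite.subset (Finset.finite_toSet (Finset.finAntidiagonal n k)) ?_
  rintro m ⟨_, hm⟩
  simpa using hm

noncomputable def cnt {n : ℕ} (M : Set (Fin n → ℕ)) (k : ℕ) : ℕ :=
  {m | m ∈ M ∧ ∑ i, m i = k}.ncard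

noncomputable def HS {n : ℕ} (M : Set (Fin n → ℕ)) : PowerSeries ℤ :=
  PowerSeries.mk fun k => (cnt M k : ℤ)

def msl {n : ℕ} (M : Set (Fin (n+1) → ℕ)) (j : ℕ) : Set (Fin n → ℕ) :=
  {m | (Fin.cons j m : Fin (n+1) → ℕ) ∈ M}

def shift {n : ℕ} (M : Set (Fin (n+1) → ℕ)) : Set (Fin (n+1) → ℕ) :=
  {m | (Fin.cons (m 0 + 1) (Fin.tail m) : Fin (n+1) → ℕ) ∈ M}

theorem cnt_zero_shift {n : ℕ} (M : Set (Fin (n+1) → ℕ)) : cnt M 0 = cnt (msl M 0) 0 := by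
  unfold cnt
  symm
  refine Set.ncard_congr (fun m _ => (Fin.cons 0 m : Fin (n+1) → ℕ)) ?_ ?_ ?_
  · rintro m ⟨h1, h2⟩
    refine ⟨h1, ?_⟩
    rw [Fin.sum_univ_succ]; simpa using h2
  · rintro a b _ _ hab
    exact Fin.cons_right_injective (α := fun _ => ℕ) 0 hab
  · rintro b ⟨h1, h2⟩
    rw [Fin.sum_univ_succ] at h2
    have h0 : b 0 = 0 := by omega
    refine ⟨Fin.tail b, ⟨?_, ?_⟩, ?_⟩
    · show Fin.cons 0 (Fin.tail b) ∈ M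
      rw [← h0, Fin.cons_self_tail]; exact h1
    · simp only [Fin.tail]; omega
    · rw [← h0, Fin.cons_self_tail]

theorem cnt_succ_shift {n : ℕ} (M : Set (Fin (n+1) → ℕ)) (k : ℕ) :
    cnt M (k+1) = cnt (msl M 0) (k+1) + cnt (shift M) k := by
  have key : {m | m ∈ M ∧ ∑ i, m i = k+1} =
      (fun m => (Fin.cons 0 m : Fin (n+1) → ℕ)) '' {m | m ∈ msl M 0 ∧ ∑ i, m i = k+1} ∪
      (fun m : Fin (n+1) → ℕ => (Fin.cons (m 0 + 1) (Fin.tail m) : Fin (n+1) → ℕ)) ''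
        {m | m ∈ shift M ∧ ∑ i, m i = k} := by
    ext b
    constructor
    · rintro ⟨h1, h2⟩
      rw [Fin.sum_univ_succ] at h2
      rcases hb : b 0 with _ | c
      · left
        refine ⟨Fin.tail b, ⟨?_, ?_⟩, ?_⟩
        · show Fin.cons 0 (Fin.tail b) ∈ M
          rw [← hb, Fin.cons_self_tail]; exact h1
        · simp only [Fin.tail]; omega
        · simp only; rw [← hb, Fin.cons_self_tail]
      · right
        refine ⟨Fin.cons c (Fin.tail b), ⟨?_, ?_⟩, ?_⟩
        · show Fin.cons _ _ ∈ M
          simp only [Fin.cons_zero, Fin.tail_cons]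
          rw [← hb, Fin.cons_self_tail]; exact h1
        · rw [Fin.sum_univ_succ]
          simp only [Fin.cons_zero, Fin.cons_succ, Fin.tail]; omega
        · simp only [Fin.cons_zero, Fin.tail_cons]
          rw [← hb, Fin.cons_self_tail]
    · rintro (⟨m, ⟨h1, h2⟩, rfl⟩ | ⟨m, ⟨h1, h2⟩, rfl⟩)
      · refine ⟨h1, ?_⟩
        rw [Fin.sum_univ_succ]; simpa using h2
      · refine ⟨h1, ?_⟩
        rw [Fin.sum_univ_succ] at h2 ⊢
        simp only [Fin.cons_zero, Fin.cons_succ, Fin.tail]; omega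
  unfold cnt
  rw [key, Set.ncard_union_eq ?_ ((finite_deg _ _).image _) ((finite_deg _ _).image _)]
  · rw [Set.ncard_image_of_injective, Set.ncard_image_of_injective]
    · intro a b hab
      have h0 := congrFun hab 0
      have h1 := congrArg Fin.tail hab
      simp only [Fin.cons_zero, Fin.tail_cons] at h0 h1
      rw [← Fin.cons_self_tail a, ← Fin.cons_self_tail b, h1]
      congr 1; omega
    · exact Fin.cons_right_injective (α := fun _ => ℕ) 0
  · rw [Set.disjoint_left]
    rintro _ ⟨m, _, rfl⟩ ⟨m', _, h'⟩
    have := congrFun h' 0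
    simp at this

theorem HS_succ {n : ℕ} (M : Set (Fin (n+1) → ℕ)) :
    HS M = HS (msl M 0) + PowerSeries.X * HS (shift M) := by
  ext k
  rcases k with _ | k
  · simp [HS, cnt_zero_shift]
  · rw [map_add, PowerSeries.coeff_succ_X_mul]
    simp [HS, cnt_succ_shift]

theorem stab {n : ℕ} (M : Set (Fin (n+1) → ℕ)) (hM : IsLowerSet M) :
    ∃ J, ∀ j, J ≤ j → msl M j = msl M J := by
  by_contra! hcon
  have anti : ∀ i j, i ≤ j → msl M j ⊆ msl M i := by
    intro i j hij m hm
    refine hM ?_ hm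
    rw [Fin.cons_le_cons]
    exact ⟨hij, le_rfl⟩
  have step : ∀ J, ∃ j, J < j ∧ ∃ a, a ∈ msl M J ∧ a ∉ msl M j := by
    intro J
    obtain ⟨j, hj, hne⟩ := hcon J
    refine ⟨j, lt_of_le_of_ne hj (fun h => hne (by rw [h])), ?_⟩
    by_contra! h
    exact hne (Set.Subset.antisymm (anti _ _ hj) h)
  choose g hg a ha hna using step
  let s : ℕ → ℕ := fun i => g^[i] 0
  have hs : ∀ i, s (i+1) = g (s i) := fun i => Function.iterate_succ_apply' g i 0
  have hsm : StrictMono s := strictMono_nat_of_lt_succ (fun i => by rw [hs]; exact hg _)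
  obtain ⟨i, j, hij, hle⟩ := wellQuasiOrdered_le (α := Fin n → ℕ) (fun i => a (s i))
  have h1 : a (s j) ∈ msl M (s (i+1)) := anti _ _ (hsm.monotone hij) (ha _)
  rw [hs] at h1
  refine hna (s i) (hM ?_ h1)
  rw [Fin.cons_le_cons]
  exact ⟨le_rfl, hle⟩

theorem slice_lower {n : ℕ} {M : Set (Fin (n+1) → ℕ)} (hM : IsLowerSet M) (j : ℕ) :
    IsLowerSet (msl M j) := by
  intro a b hab ha
  refine hM ?_ ha
  rw [Fin.cons_le_cons]
  exact ⟨le_rfl, hab⟩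

theorem shift_lower {n : ℕ} {M : Set (Fin (n+1) → ℕ)} (hM : IsLowerSet M) :
    IsLowerSet (shift M) := by
  intro a b hab ha
  refine hM ?_ ha
  rw [Fin.cons_le_cons]
  exact ⟨Nat.succ_le_succ (hab 0), fun i => hab _⟩

theorem shift_sub {n : ℕ} {M : Set (Fin (n+1) → ℕ)} (hM : IsLowerSet M) :
    shift M ⊆ M := by
  intro a ha
  refine hM ?_ ha
  conv_lhs => rw [← Fin.cons_self_tail a]
  rw [Fin.cons_le_cons]
  exact ⟨Nat.le_succ _, le_rfl⟩

theorem slice_shift {n : ℕ} (M : Set (Fin (n+1) → ℕ)) (j : ℕ) :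
    msl (shift M) j = msl M (j+1) := by
  ext m; simp [msl, shift]

def FBound {n : ℕ} (M : Set (Fin n → ℕ)) (D : ℕ) : Prop :=
  ∀ F : Finset (Fin n), (∀ m : Fin n → ℕ, (∀ i, i ∉ F → m i = 0) → m ∈ M) → F.card ≤ D

/-- Rationality of the Hilbert series of a lower set. -/
theorem HS_rational : ∀ (n : ℕ) (M : Set (Fin n → ℕ)) (D : ℕ), IsLowerSet M → FBound M D →
    ∃ p : Polynomial ℤ, (1 - PowerSeries.X) ^ D * HS M = (p : PowerSeries ℤ) := by
  intro n
  induction n with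
  | zero =>
    intro M D _ _
    refine ⟨(1 - Polynomial.X) ^ D * Polynomial.C (cnt M 0 : ℤ), ?_⟩
    have : HS M = PowerSeries.C (cnt M 0 : ℤ) := by
      ext k
      rcases k with _ | k
      · simp [HS]
      · rw [PowerSeries.coeff_C]; simp [HS, cnt]
    rw [this]
    push_cast
    rfl
  | succ n ih =>
    intro M D hM hF
    have slice0 : ∀ M : Set (Fin (n+1) → ℕ), IsLowerSet M → FBound M D →
        FBound (msl M 0) D := by
      intro M hM hF F hFs
      have := hF (F.map (Fin.succEmb n)) ?_
      · simpa using this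
      · intro m hm
        have h0 : m 0 = 0 := hm 0 (by simp [Fin.succ_ne_zero])
        have h1 : Fin.tail m ∈ msl M 0 := hFs _ (fun i hi => hm _ (by simpa using hi))
        have h2 : (Fin.cons 0 (Fin.tail m) : Fin (n+1) → ℕ) ∈ M := h1
        rwa [← h0, Fin.cons_self_tail] at h2
    obtain ⟨J, hJ⟩ := stab M hM
    induction J generalizing M with
    | zero =>
      have hmem : ∀ m, m ∈ M ↔ Fin.tail m ∈ msl M 0 := by
        intro m
        rw [← hJ (m 0) (Nat.zero_le _)]
        conv_lhs => rw [← Fin.cons_self_tail m]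
        rfl
      have hsh : shift M = M := by
        ext m
        rw [hmem m]
        show Fin.cons _ _ ∈ M ↔ _
        rw [hmem, Fin.tail_cons]
      by_cases hne : (msl M 0).Nonempty
      · have h0 : (0 : Fin n → ℕ) ∈ msl M 0 := by
          obtain ⟨a, ha⟩ := hne
          exact slice_lower hM 0 (zero_le (a := a)) ha
        have hF' : ∀ F : Finset (Fin n), (∀ m : Fin n → ℕ, (∀ i, i ∉ F → m i = 0) → m ∈ msl M 0) →
            F.card + 1 ≤ D := by
          intro F hFs
          have := hF (Finset.cons 0 (F.map (Fin.succEmb n)) (by simp [Fin.succ_ne_zero])) ?_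
          · simpa using this
          · intro m hm
            rw [hmem]
            exact hFs _ (fun i hi => hm _ (by simpa [Fin.succ_ne_zero] using hi))
        have hD : 1 ≤ D := by
          have := hF' ∅ (fun m hm => by
            have : m = 0 := funext fun i => hm i (by simp)
            rwa [this])
          simpa using this
        obtain ⟨D, rfl⟩ : ∃ D', D = D' + 1 := ⟨D - 1, by omega⟩
        obtain ⟨p, hp⟩ := ih (msl M 0) D (slice_lower hM 0)
          (fun F h => by have := hF' F h; omega)
        refine ⟨p, ?_⟩
        have h3 := HS_succ M
        rw [hsh] at h3
        rw [← hp, pow_succ]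
        linear_combination (1 - PowerSeries.X) ^ D * h3
      · refine ⟨0, ?_⟩
        have : M = ∅ := by
          ext m; rw [hmem]
          simp only [Set.mem_empty_iff_false, iff_false]
          exact fun h => hne ⟨_, h⟩
        have h0 : HS M = 0 := by
          ext k; simp [HS, cnt, this]
        simp [h0]
    | succ J ihJ =>
      obtain ⟨p, hp⟩ := ih (msl M 0) D (slice_lower hM 0) (slice0 M hM hF)
      obtain ⟨q, hq⟩ := ihJ (shift M) (shift_lower hM)
        (fun F h => hF F (fun m hm => shift_sub hM (h m hm)))
        (fun j hj => by rw [slice_shift, slice_shift]; exact hJ _ (by omega))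
      refine ⟨p + Polynomial.X * q, ?_⟩
      rw [HS_succ]
      push_cast
      rw [← hp, ← hq]; ring

def phi {V : Type*} {n : ℕ} (y : Fin n → V → ℤ) (m : Fin n → ℕ) : V → ℤ := ∑ i, m i • y i

theorem phi_add {V : Type*} {n : ℕ} (y : Fin n → V → ℤ) (m m' : Fin n → ℕ) :
    phi y (m + m') = phi y m + phi y m' := by
  simp [phi, add_smul, Finset.sum_add_distrib]

/-- Standard monomials. -/
def stdM {V : Type*} {n : ℕ} (y : Fin n → V → ℤ) : Set (Fin n → ℕ) :=
  {m | ∀ m', ∑ i, m' i = ∑ i, m i → phi y m' = phi y m → toLex m ≤ toLex m'}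

theorem stdM_lower {V : Type*} {n : ℕ} (y : Fin n → V → ℤ) : IsLowerSet (stdM y) := by
  intro a b hab ha m' hs hp
  obtain ⟨c, rfl⟩ : ∃ c, a = b + c := ⟨a - b, funext fun i => by
    have : b i ≤ a i := hab i
    simp only [Pi.add_apply, Pi.sub_apply]; omega⟩
  have := ha (m' + c) (by simp [Finset.sum_add_distrib, hs]) (by rw [phi_add, phi_add, hp])
  rw [toLex_add, toLex_add] at this
  exact le_of_add_le_add_right this

theorem stdM_unique {V : Type*} {n : ℕ} (y : Fin n → V → ℤ) {m m' : Fin n → ℕ}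
    (hm : m ∈ stdM y) (hm' : m' ∈ stdM y) (hs : ∑ i, m i = ∑ i, m' i)
    (hp : phi y m = phi y m') : m = m' :=
  toLex.injective (le_antisymm (hm m' hs.symm hp.symm) (hm' m hs hp))

theorem exists_std {V : Type*} {n : ℕ} (y : Fin n → V → ℤ) (m : Fin n → ℕ) :
    ∃ m' ∈ stdM y, ∑ i, m' i = ∑ i, m i ∧ phi y m' = phi y m := by
  let T : Set (Lex (Fin n → ℕ)) :=
    {l | ∑ i, (ofLex l) i = ∑ i, m i ∧ phi y (ofLex l) = phi y m}
  have hT : T.Nonempty := ⟨toLex m, rfl, rfl⟩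
  have wf : WellFounded ((· < ·) : Lex (Fin n → ℕ) → Lex (Fin n → ℕ) → Prop) := wellFounded_lt
  obtain ⟨h1, h2⟩ := wf.min_mem T hT
  refine ⟨ofLex (wf.min T hT), ?_, h1, h2⟩
  intro m' hs hp
  rw [toLex_ofLex]
  exact not_lt.mp (wf.not_lt_min T (x := toLex m') ⟨hs.trans h1, hp.trans h2⟩)

theorem count_rational {V : Type*} {n : ℕ} (y : Fin n → V → ℤ) (D : ℕ)
    (hD : ∀ F : Finset (Fin n), (∀ m m' : Fin n → ℕ, (∀ i, i ∉ F → m i = 0) →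
      (∀ i, i ∉ F → m' i = 0) → ∑ i, m i = ∑ i, m' i → phi y m = phi y m' → m = m') →
      F.card ≤ D) :
    ∃ p : Polynomial ℤ, (1 - PowerSeries.X) ^ D *
      PowerSeries.mk (fun k => (({v | ∃ m : Fin n → ℕ, ∑ i, m i = k ∧ phi y m = v}.ncard : ℕ) : ℤ))
        = (p : PowerSeries ℤ) := by
  obtain ⟨p, hp⟩ := HS_rational n (stdM y) D (stdM_lower y) (by
    intro F hF
    refine hD F (fun m m' hm hm' hs hph => stdM_unique y (hF m hm) (hF m' hm') hs hph))
  refine ⟨p, ?_⟩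
  rw [← hp]
  congr 1
  ext k
  simp only [PowerSeries.coeff_mk, HS, cnt, Nat.cast_inj]
  symm
  refine Set.ncard_congr (fun m _ => phi y m) ?_ ?_ ?_
  · rintro m ⟨_, hs⟩
    exact ⟨m, hs, rfl⟩
  · rintro a b ⟨ha, has⟩ ⟨hb, hbs⟩ hab
    exact stdM_unique y ha hb (has.trans hbs.symm) hab
  · rintro v ⟨m, hs, rfl⟩
    obtain ⟨m', h1, h2, h3⟩ := exists_std y m
    exact ⟨m', ⟨h1, h2.trans hs⟩, h3⟩

/-- Integer vectors: affine independence over `ℤ` bounds the cardinality by dimension. -/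
theorem card_bound {V : Type*} [Fintype V] {n : ℕ} (y : Fin n → V → ℤ) (W : Submodule ℝ (V → ℝ))
    (hW : ∀ i, (fun v => (y i v : ℝ)) ∈ W) (F : Finset (Fin n))
    (hF : ∀ m m' : Fin n → ℕ, (∀ i, i ∉ F → m i = 0) →
      (∀ i, i ∉ F → m' i = 0) → ∑ i, m i = ∑ i, m' i → phi y m = phi y m' → m = m') :
    F.card ≤ Module.finrank ℝ W + 1 := by
  classical
  -- integer version
  have hZ : ∀ c : Fin n → ℤ, (∀ i, i ∉ F → c i = 0) → ∑ i, c i = 0 →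
      (∀ v, ∑ i, c i * y i v = 0) → c = 0 := by
    intro c hc hs hv
    have := hF (fun i => (c i).toNat) (fun i => (-c i).toNat)
      (fun i hi => by simp [hc i hi]) (fun i hi => by simp [hc i hi]) ?_ ?_
    · ext i
      have h1 := congrFun this i
      change (c i).toNat = (-c i).toNat at h1
      simp only [Pi.zero_apply]; omega
    · zify
      rw [← sub_eq_zero, ← Finset.sum_sub_distrib, ← hs]
      refine Finset.sum_congr rfl fun i _ => ?_
      omega
    · ext v
      rw [← sub_eq_zero, ← hv v]
      simp only [phi, Finset.sum_apply, Pi.smul_apply]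
      simp only [nsmul_eq_mul]
      rw [← Finset.sum_sub_distrib]
      refine Finset.sum_congr rfl fun i _ => ?_
      rw [← sub_mul]
      congr 1
      omega
  -- rational version
  have hQ : ∀ c : Fin n → ℚ, (∀ i, i ∉ F → c i = 0) → ∑ i, c i = 0 →
      (∀ v, ∑ i, c i * y i v = 0) → c = 0 := by
    intro c hc hs hv
    obtain ⟨b, hb⟩ := IsLocalization.exist_integer_multiples_of_finite (nonZeroDivisors ℤ) c
    choose z hz using hb
    have hb0 : ((b : ℤ) : ℚ) ≠ 0 := by
      exact_mod_cast nonZeroDivisors.ne_zero b.2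
    have hz' : ∀ i, (z i : ℚ) = (b : ℤ) * c i := by
      intro i
      have := hz i
      simpa using this
    have h0 := hZ z (fun i hi => by
        have := hz' i
        rw [hc i hi, mul_zero] at this
        exact_mod_cast this) (by
        have : ((∑ i, z i : ℤ) : ℚ) = 0 := by
          push_cast
          simp only [hz']
          rw [← Finset.mul_sum, hs, mul_zero]
        exact_mod_cast this) (fun v => by
        have : ((∑ i, z i * y i v : ℤ) : ℚ) = 0 := by
          push_cast
          simp only [hz', mul_assoc]
          rw [← Finset.mul_sum, hv, mul_zero]
        exact_mod_cast this)
    ext i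
    have := hz' i
    rw [h0] at this
    simpa [hb0] using this
  -- real version
  have hR : ∀ c : Fin n → ℝ, (∀ i, i ∉ F → c i = 0) → ∑ i, c i = 0 →
      (∀ v, ∑ i, c i * y i v = 0) → c = 0 := by
    intro c hc hs hv
    ext i
    refine (Module.forall_dual_apply_eq_zero_iff ℚ (c i)).mp fun g => ?_
    refine congrFun (hQ (fun i => g (c i)) (fun i hi => by simp [hc i hi]) ?_ ?_) i
    · rw [← map_sum, hs, map_zero]
    · intro v
      have : g (∑ i, c i * y i v) = 0 := by rw [hv, map_zero]
      rw [map_sum] at this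
      rw [← this]
      refine Finset.sum_congr rfl fun i _ => ?_
      rw [mul_comm, mul_comm (c i), ← zsmul_eq_mul, ← zsmul_eq_mul, map_zsmul]
  let u : F → W × ℝ := fun i => (⟨_, hW i⟩, 1)
  have hli : LinearIndependent ℝ u := by
    rw [Fintype.linearIndependent_iff]
    intro g hg i
    have h1 := congrArg (fun x => ((x.1 : W) : V → ℝ)) hg
    have h2 := congrArg Prod.snd hg
    have key := hR (fun i => if hi : i ∈ F then g ⟨i, hi⟩ else 0)
      (fun i hi => by simp [hi]) ?_ ?_
    · have := congrFun key i
      simpa using this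
    · rw [Prod.snd_sum] at h2
      simp only [u, Prod.smul_snd, smul_eq_mul, mul_one, Prod.snd_zero] at h2
      refine Eq.trans ?_ h2
      rw [← Finset.sum_subset (Finset.subset_univ F), ← Finset.sum_attach]
      · rw [← Finset.univ_eq_attach]
        exact Finset.sum_congr rfl fun i _ => by simp
      · intro i _ hi; simp [hi]
    · intro v
      have h3 := congrFun h1 v
      simp only [Prod.fst_sum, u, Prod.smul_fst, Submodule.coe_sum, Submodule.coe_smul,
        Finset.sum_apply, Pi.smul_apply, smul_eq_mul, Prod.fst_zero, Submodule.coe_zero,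
        Pi.zero_apply] at h3
      refine Eq.trans ?_ h3
      rw [← Finset.sum_subset (Finset.subset_univ F), ← Finset.sum_attach]
      · rw [← Finset.univ_eq_attach]
        exact Finset.sum_congr rfl fun i _ => by simp
      · intro i _ hi; simp [hi]
  have := hli.fintype_card_le_finrank
  simpa [Module.finrank_prod] using this

theorem mem_smul_rootPoly {V E : Type*} [Fintype E] [DecidableEq V] (t h : E → V) (S : Set E)
    (k : ℕ) (y : V → ℝ) :
    y ∈ (k : ℝ) • rootPolyOn t h S ↔ ∃ a : E → ℝ, (∀ f, 0 ≤ a f) ∧ (∀ f, f ∉ S → a f = 0) ∧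
      ∑ f, a f ≤ k ∧ y = ∑ f, a f • xvec t h f := by
  classical
  have hsub : rootPolyOn t h S ⊆ {y | ∃ a : E → ℝ, (∀ f, 0 ≤ a f) ∧ (∀ f, f ∉ S → a f = 0) ∧
      ∑ f, a f ≤ 1 ∧ y = ∑ f, a f • xvec t h f} := by
    refine convexHull_min ?_ ?_
    · rintro y (rfl | ⟨f, hf, rfl⟩)
      · exact ⟨0, by simp⟩
      · refine ⟨Pi.single f 1, ?_, ?_, ?_, ?_⟩
        · intro g; by_cases hg : g = f
          · subst hg; simp
          · simp [hg]
        · intro g hg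
          have : g ≠ f := fun h => hg (h ▸ hf)
          simp [this]
        · simp
        · rw [Finset.sum_eq_single f]
          · simp
          · intro b _ hb; simp [hb]
          · simp
    · rintro y ⟨a, ha, hS, hs, rfl⟩ z ⟨b, hb, hS', hs', rfl⟩ α β hα hβ hαβ
      refine ⟨fun f => α * a f + β * b f, ?_, ?_, ?_, ?_⟩
      · intro f; have := ha f; have := hb f; positivity
      · intro f hf; simp [hS f hf, hS' f hf]
      · rw [Finset.sum_add_distrib, ← Finset.mul_sum, ← Finset.mul_sum]
        nlinarith
      · simp only [add_smul, Finset.sum_add_distrib, Finset.smul_sum, mul_smul]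
  have hconv : Convex ℝ (rootPolyOn t h S) := convex_convexHull ℝ _
  have h0 : (0 : V → ℝ) ∈ rootPolyOn t h S := subset_convexHull ℝ _ (by simp)
  have hx : ∀ f ∈ S, xvec t h f ∈ rootPolyOn t h S := fun f hf =>
    subset_convexHull ℝ _ (Or.inr ⟨f, hf, rfl⟩)
  constructor
  · rintro ⟨z, hz, rfl⟩
    obtain ⟨a, ha, hS, hs, rfl⟩ := hsub hz
    refine ⟨fun f => k * a f, fun f => by have := ha f; positivity, fun f hf => by simp [hS f hf],
      ?_, ?_⟩
    · rw [← Finset.mul_sum]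
      have : (0 : ℝ) ≤ k := by positivity
      nlinarith
    · simp only [Finset.smul_sum, mul_smul]
  · rintro ⟨a, ha, hS, hs, rfl⟩
    have hA0 : 0 ≤ ∑ f, a f := Finset.sum_nonneg fun f _ => ha f
    rcases hA0.eq_or_lt with hA | hA
    · have : ∀ f, a f = 0 := fun f =>
        (Finset.sum_eq_zero_iff_of_nonneg fun f _ => ha f).mp hA.symm f (Finset.mem_univ f)
      refine ⟨0, h0, ?_⟩
      simp [this]
    · have hk : (0 : ℝ) < k := hA.trans_le hs
      refine ⟨(k : ℝ)⁻¹ • ∑ f, a f • xvec t h f, ?_, ?_⟩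
      · have h1 : ∑ f, (a f / ∑ g, a g) • (if f ∈ S then xvec t h f else 0) ∈ rootPolyOn t h S := by
          refine hconv.sum_mem (fun f _ => div_nonneg (ha f) hA.le) ?_ ?_
          · rw [← Finset.sum_div, div_self hA.ne']
          · intro f _
            split_ifs with hf
            · exact hx f hf
            · exact h0
        have h2 := hconv.smul_mem_of_zero_mem h0 h1 (t := (∑ g, a g) / k)
          ⟨by positivity, (div_le_one hk).mpr hs⟩
        convert h2 using 1
        rw [Finset.smul_sum, Finset.smul_sum]
        refine Finset.sum_congr rfl fun f _ => ?_
        by_cases hf : f ∈ S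
        · rw [if_pos hf, smul_smul, smul_smul]
          congr 1
          field_simp
        · simp [hf, hS f hf]
      · simp only
        rw [smul_smul, mul_inv_cancel₀ hk.ne', one_smul]

/-- the contraction of `b` to `a` -/
def contr {V : Type*} [DecidableEq V] (a b : V) (v : V) : V := if v = b then a else v

noncomputable def cmap {V : Type*} [DecidableEq V] (a b : V) : (V → ℝ) →ₗ[ℝ] (V → ℝ) where
  toFun y := fun v => if v = b then 0 else if v = a then y a + y b else y v
  map_add' x y := by
    ext v; simp only [Pi.add_apply]; split_ifs <;> ring
  map_smul' c y := by
    ext v; simp only [Pi.smul_apply, smul_eq_mul, RingHom.id_apply]; split_ifs <;> ring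

theorem cmap_xvec {V E : Type*} [DecidableEq V] (t h : E → V) (a b : V) (hab : a ≠ b) (f : E) :
    cmap a b (xvec t h f) = xvec (contr a b ∘ t) (contr a b ∘ h) f := by
  ext v
  simp only [cmap, LinearMap.coe_mk, AddHom.coe_mk, xvec, contr, Function.comp]
  grind

theorem cmap_ker {V E : Type*} [DecidableEq V] (t h : E → V) (e : E) (hab : t e ≠ h e) (y : V → ℝ)
    (hy : cmap (t e) (h e) y = 0) : y = y (h e) • xvec t h e := by
  ext v
  have h1 := congrFun hy v
  have h2 := congrFun hy (t e)
  simp only [cmap, LinearMap.coe_mk, AddHom.coe_mk, Pi.zero_apply, xvec, Pi.smul_apply,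
    smul_eq_mul] at h1 h2 ⊢
  grind

theorem cmap_int {V : Type*} [DecidableEq V] (a b : V) (y : V → ℝ)
    (hy : ∀ v, ∃ z : ℤ, y v = z) : ∀ v, ∃ z : ℤ, cmap a b y v = z := by
  intro v
  simp only [cmap, LinearMap.coe_mk, AddHom.coe_mk]
  obtain ⟨z1, h1⟩ := hy a
  obtain ⟨z2, h2⟩ := hy b
  split_ifs
  · exact ⟨0, by simp⟩
  · exact ⟨z1 + z2, by rw [h1, h2]; push_cast; rfl⟩
  · exact hy v

theorem integral_of_indep {V E : Type*} [DecidableEq V] (F : Finset E) :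
    ∀ (t h : E → V) (a : E → ℝ),
    (∀ c : E → ℝ, ∑ f ∈ F, c f • xvec t h f = 0 → ∀ f ∈ F, c f = 0) →
    (∀ v, ∃ z : ℤ, (∑ f ∈ F, a f • xvec t h f) v = z) → ∀ f ∈ F, ∃ z : ℤ, a f = z := by
  classical
  induction F using Finset.induction_on with
  | empty => simp
  | insert e F he ih =>
    intro t h a hind hintg
    have hne : t e ≠ h e := by
      intro hh
      have := hind (Pi.single e 1) (by
        rw [Finset.sum_insert he, Finset.sum_eq_zero]
        · ext v; simp [xvec, hh]
        · intro f hf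
          have : f ≠ e := fun h => he (h ▸ hf)
          simp [this]) e (by simp)
      simp at this
    have hxe : xvec t h e (h e) = 1 := by simp [xvec, hne.symm]
    have hmap : ∀ c : E → ℝ, cmap (t e) (h e) (∑ f ∈ F, c f • xvec t h f) =
        ∑ f ∈ F, c f • xvec (contr (t e) (h e) ∘ t) (contr (t e) (h e) ∘ h) f := by
      intro c
      simp only [map_sum, map_smul, cmap_xvec t h _ _ hne]
    have hmape : cmap (t e) (h e) (xvec t h e) = 0 := by
      rw [cmap_xvec _ _ _ _ hne]
      ext v
      simp [xvec, contr, hne]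
    have hF := ih (contr (t e) (h e) ∘ t) (contr (t e) (h e) ∘ h) a ?_ ?_
    · intro f hf
      rcases Finset.mem_insert.mp hf with rfl | hf
      · obtain ⟨z, hz⟩ := hintg (h f)
        choose! w hw using hF
        rw [Finset.sum_insert he] at hz
        simp only [Pi.add_apply, Pi.smul_apply, hxe, smul_eq_mul, mul_one, Finset.sum_apply] at hz
        refine ⟨z - ∑ g ∈ F, w g * ((if h f = h g then 1 else 0) - (if h f = t g then 1 else 0)), ?_⟩
        push_cast
        rw [← hz, add_sub_assoc, ← Finset.sum_sub_distrib, Finset.sum_eq_zero, add_zero]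
        intro g hg
        rw [hw g hg]
        simp [xvec]
      · exact hF f hf
    · intro c hc f hf
      rw [← hmap] at hc
      have h1 := cmap_ker t h e hne _ hc
      set y := ∑ f ∈ F, c f • xvec t h f with hy
      have := hind (fun g => if g = e then - y (h e) else c g) (by
        rw [Finset.sum_insert he]
        have : ∑ g ∈ F, (if g = e then - y (h e) else c g) • xvec t h g = y := by
          refine Finset.sum_congr rfl fun g hg => ?_
          rw [if_neg (fun hh : g = e => he (hh ▸ hg))]
        rw [this, if_pos rfl, neg_smul, ← h1, neg_add_cancel]) f (Finset.mem_insert_of_mem hf)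
      rwa [if_neg (fun hh : f = e => he (hh ▸ hf))] at this
    · rw [← hmap]
      have := cmap_int (t e) (h e) _ hintg
      rwa [Finset.sum_insert he, map_add, map_smul, hmape, smul_zero, zero_add] at this

theorem idp_aux {V E : Type*} [Fintype E] [DecidableEq V] (t h : E → V) (k : ℕ) (y : V → ℝ)
    (hy : ∀ v, ∃ z : ℤ, y v = z) : ∀ (N : ℕ) (a : E → ℝ), (∀ f, 0 ≤ a f) → ∑ f, a f ≤ k →
    ∑ f, a f • xvec t h f = y → {f | ¬ ∃ z : ℤ, a f = z}.ncard ≤ N →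
    ∃ b : E → ℕ, (∀ f, a f = 0 → b f = 0) ∧ ∑ f, b f ≤ k ∧ ∑ f, (b f : ℝ) • xvec t h f = y := by
  classical
  intro N
  induction N with
  | zero =>
    intro a ha hs hay hN
    have hempty : {f | ¬ ∃ z : ℤ, a f = z} = ∅ := by
      rw [← Set.ncard_eq_zero]; omega
    have hintg : ∀ f, ∃ z : ℤ, a f = z := by
      intro f
      by_contra hf
      have : f ∈ {f | ¬ ∃ z : ℤ, a f = z} := hf
      rw [hempty] at this; exact this
    have hnat : ∀ f, ∃ b : ℕ, a f = b := by
      intro f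
      obtain ⟨z, hz⟩ := hintg f
      have h0 := ha f
      rw [hz] at h0
      have : 0 ≤ z := by exact_mod_cast h0
      lift z to ℕ using this
      exact ⟨z, by rw [hz]; simp⟩
    choose b hb using hnat
    refine ⟨b, ?_, ?_, ?_⟩
    · intro f hf; rw [hb] at hf; exact_mod_cast hf
    · simp only [hb] at hs; exact_mod_cast hs
    · simp only [hb] at hay; exact hay
  | succ N ih =>
    intro a ha hs hay hN
    set F : Finset E := Finset.univ.filter (fun f => ¬ ∃ z : ℤ, a f = z) with hFdef
    have hFmem : ∀ f, f ∈ F ↔ ¬ ∃ z : ℤ, a f = z := by intro f; simp [hFdef]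
    have hFc : {f | ¬ ∃ z : ℤ, a f = z} = (F : Set E) := by ext f; simp [hFdef]
    by_cases hind : ∀ c : E → ℝ, ∑ f ∈ F, c f • xvec t h f = 0 → ∀ f ∈ F, c f = 0
    · have hall := integral_of_indep F t h a hind ?_
      · refine ih a ha hs hay ?_
        have : F = ∅ := by
          rw [Finset.eq_empty_iff_forall_notMem]
          intro f hf
          exact (hFmem f).mp hf (hall f hf)
        rw [hFc, this]; simp
      · intro v
        have h1 : ∑ f ∈ F, a f • xvec t h f = y - ∑ f ∈ Finset.univ \ F, a f • xvec t h f := by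
          rw [← hay, ← Finset.sum_sdiff (Finset.subset_univ F)]; abel
        have h2 : ∀ f, ∃ z : ℤ, f ∈ Finset.univ \ F → a f = z := by
          intro f
          by_cases hf : f ∈ F
          · exact ⟨0, by simp [hf]⟩
          · have := (hFmem f).not.mp hf
            push Not at this
            obtain ⟨z, hz⟩ := this
            exact ⟨z, fun _ => hz⟩
        choose w hw using h2
        obtain ⟨z, hz⟩ := hy v
        refine ⟨z - ∑ g ∈ Finset.univ \ F,
          w g * ((if v = h g then 1 else 0) - (if v = t g then 1 else 0)), ?_⟩
        rw [h1, Pi.sub_apply, hz, Finset.sum_apply]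
        push_cast
        congr 1
        refine Finset.sum_congr rfl fun g hg => ?_
        rw [← hw g hg]
        simp [xvec]
    · push Not at hind
      obtain ⟨c0, hc0, f0, hf0, hcf0⟩ := hind
      -- choose the sign and restrict the support
      obtain ⟨c, hcF, hcx, hcs, hcne⟩ : ∃ c : E → ℝ, (∀ f, f ∉ F → c f = 0) ∧
          ∑ f, c f • xvec t h f = 0 ∧ ∑ f, c f ≤ 0 ∧ c f0 ≠ 0 := by
        let c1 : E → ℝ := fun f => if f ∈ F then c0 f else 0
        have hx1 : ∑ f, c1 f • xvec t h f = 0 := by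
          refine Eq.trans ?_ hc0
          simp only [c1, ite_smul, zero_smul]
          rw [Finset.sum_ite_mem, Finset.univ_inter]
        rcases le_total (∑ f, c1 f) 0 with hle | hle
        · exact ⟨c1, fun f hf => by simp [c1, hf], hx1, hle, by simp [c1, hf0, hcf0]⟩
        · refine ⟨fun f => - c1 f, fun f hf => by simp [c1, hf], ?_, ?_, by simp [c1, hf0, hcf0]⟩
          · simp only [neg_smul, Finset.sum_neg_distrib, hx1, neg_zero]
          · simpa using hle
      let s : E → ℝ := fun f => (if 0 < c f then ⌈a f⌉ - a f else a f - ⌊a f⌋) / |c f|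
      obtain ⟨g, hg, hgmin⟩ := Finset.exists_min_image (F.filter (fun f => c f ≠ 0)) s
        ⟨f0, by simp [hf0, hcne]⟩
      rw [Finset.mem_filter] at hg
      have hfrac : ∀ f, 0 ≤ (if 0 < c f then ⌈a f⌉ - a f else a f - ⌊a f⌋ : ℝ) := by
        intro f
        have := Int.le_ceil (a f)
        have := Int.floor_le (a f)
        split_ifs <;> linarith
      have hs0 : 0 ≤ s g := div_nonneg (hfrac g) (abs_nonneg _)
      have hfl : ∀ f, (0 : ℝ) ≤ ⌊a f⌋ := fun f => by exact_mod_cast Int.floor_nonneg.mpr (ha f)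
      have hbd : ∀ f, 0 ≤ a f + s g * c f := by
        intro f
        by_cases hcf : c f = 0
        · simp [hcf, ha f]
        · have hfF : f ∈ F := by by_contra hh; exact hcf (hcF f hh)
          rcases lt_or_gt_of_ne hcf with hneg | hpos
          · have h1 := hgmin f (by simp [hfF, hcf])
            have h2 : s f = (a f - ⌊a f⌋) / (- c f) := by
              simp only [s, if_neg (not_lt.mpr hneg.le), abs_of_neg hneg]
            rw [h2, le_div_iff₀ (by linarith)] at h1
            have := hfl f
            linarith
          · have := ha f
            positivity
      have hgint : ∃ z : ℤ, a g + s g * c g = z := by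
        rcases lt_or_gt_of_ne hg.2 with hneg | hpos
        · refine ⟨⌊a g⌋, ?_⟩
          simp only [s, if_neg (not_lt.mpr hneg.le), abs_of_neg hneg]
          have hcg := hg.2
          rw [div_neg, neg_mul, div_mul_cancel₀ _ hcg]
          ring
        · refine ⟨⌈a g⌉, ?_⟩
          simp only [s, if_pos hpos, abs_of_pos hpos]
          field_simp
          ring
      have hres := ih (fun f => a f + s g * c f) hbd ?_ ?_ ?_
      · obtain ⟨b, hb1, hb2, hb3⟩ := hres
        refine ⟨b, ?_, hb2, hb3⟩
        intro f hf
        have : f ∉ F := by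
          rw [hFmem, not_not]; exact ⟨0, by simp [hf]⟩
        exact hb1 f (by simp [hf, hcF f this])
      · rw [Finset.sum_add_distrib, ← Finset.mul_sum]
        nlinarith
      · simp only [add_smul, Finset.sum_add_distrib, mul_smul, ← Finset.smul_sum, hcx, hay,
          smul_zero, add_zero]
      · have hss : {f | ¬ ∃ z : ℤ, a f + s g * c f = z} ⊂ {f | ¬ ∃ z : ℤ, a f = z} := by
          refine ⟨?_, ?_⟩
          · intro f hf
            rw [hFc]
            by_contra hh
            have hh' : f ∉ F := hh
            have h1 := hcF f hh'
            rw [hFmem, not_not] at hh'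
            apply hf
            rw [h1, mul_zero, add_zero]; exact hh'
          · intro hsub
            have : g ∈ {f | ¬ ∃ z : ℤ, a f = z} := by rw [hFc]; exact hg.1
            exact hsub this hgint
        have := Set.ncard_lt_ncard hss (Set.toFinite _)
        omega

theorem idp {V E : Type*} [Fintype E] [DecidableEq V] (t h : E → V) (S : Set E) (k : ℕ)
    (p : V → ℤ) :
    (fun v => (p v : ℝ)) ∈ (k : ℝ) • rootPolyOn t h S ↔ ∃ b : E → ℕ, (∀ f, f ∉ S → b f = 0) ∧
      ∑ f, b f ≤ k ∧ ∑ f, (b f : ℝ) • xvec t h f = (fun v => (p v : ℝ)) := by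
  rw [mem_smul_rootPoly]
  constructor
  · rintro ⟨a, ha, hS, hs, hy⟩
    obtain ⟨b, h1, h2, h3⟩ := idp_aux t h k _ (fun v => ⟨p v, rfl⟩) _ a ha hs hy.symm le_rfl
    exact ⟨b, fun f hf => h1 f (hS f hf), h2, h3⟩
  · rintro ⟨b, h1, h2, h3⟩
    exact ⟨fun f => b f, fun f => by positivity, fun f hf => by simp [h1 f hf],
      by simp only; exact_mod_cast h2, h3.symm⟩

theorem vectorSpan_root {V E : Type*} [DecidableEq V] (t h : E → V) (S : Set E) :
    vectorSpan ℝ (rootPolyOn t h S) = Submodule.span ℝ (xvec t h '' S) := by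
  have h0 : (0 : V → ℝ) ∈ ({0} ∪ (xvec t h '' S) : Set (V → ℝ)) := by simp
  rw [rootPolyOn, ← direction_affineSpan, affineSpan_convexHull, direction_affineSpan,
    vectorSpan_eq_span_vsub_set_right ℝ h0]
  simp

def ivec {V E : Type*} [DecidableEq V] (t h : E → V) (f : E) : V → ℤ :=
  fun v => (if v = h f then 1 else 0) - (if v = t f then 1 else 0)

theorem ivec_cast {V E : Type*} [DecidableEq V] (t h : E → V) (f : E) (v : V) :
    ((ivec t h f v : ℤ) : ℝ) = xvec t h f v := by
  simp [ivec, xvec]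

theorem idp' {V E : Type*} [Fintype E] [DecidableEq V] (t h : E → V) (S : Set E) (k : ℕ)
    (q : V → ℤ) :
    (fun v => (q v : ℝ)) ∈ (k : ℝ) • rootPolyOn t h S ↔ ∃ b : E → ℕ, (∀ f, f ∉ S → b f = 0) ∧
      ∑ f, b f ≤ k ∧ ∑ f, b f • ivec t h f = q := by
  rw [idp]
  have hcast : ∀ b : E → ℕ, ∑ f, (b f : ℝ) • xvec t h f = (fun v => (q v : ℝ)) ↔
      ∑ f, b f • ivec t h f = q := by
    intro b
    rw [funext_iff, funext_iff]
    refine forall_congr' fun v => ?_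
    simp only [Finset.sum_apply, Pi.smul_apply, smul_eq_mul, ← ivec_cast]
    simp only [nsmul_eq_mul]
    exact_mod_cast Iff.rfl
  simp only [hcast]

theorem exists_hstar {V E : Type*} [Fintype V] [Fintype E] [DecidableEq V] (t h : E → V)
    (S : Set E) : ∃ p, IsHStar (rootPolyOn t h S) p := by
  classical
  let n := Fintype.card (Option E)
  let ε : Option E ≃ Fin n := Fintype.equivFin _
  let y0 : Option E → V → ℤ := fun o => o.elim 0 (fun f => if f ∈ S then ivec t h f else 0)
  let y : Fin n → V → ℤ := fun i => y0 (ε.symm i)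
  obtain ⟨p, hp⟩ := count_rational y (pdim (rootPolyOn t h S) + 1) (fun F hF =>
    card_bound y (vectorSpan ℝ (rootPolyOn t h S)) (by
      intro i
      rw [vectorSpan_root]
      show (fun v => ((y0 (ε.symm i) v : ℤ) : ℝ)) ∈ _
      rcases ε.symm i with _ | f
      · simp only [y0, Option.elim, Pi.zero_apply, Int.cast_zero]
        exact Submodule.zero_mem _
      · by_cases hf : f ∈ S
        · simp only [y0, Option.elim, if_pos hf, ivec_cast]
          exact Submodule.subset_span ⟨f, hf, rfl⟩
        · simp only [y0, Option.elim, if_neg hf, Pi.zero_apply, Int.cast_zero]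
          exact Submodule.zero_mem _) F hF)
  refine ⟨p, ?_⟩
  have hpp : (PowerSeries.mk fun i => p.coeff i) = (p : PowerSeries ℤ) := by
    ext i; simp
  unfold IsHStar
  rw [hpp, ← hp]
  congr 1
  ext k
  simp only [ehrSeries, PowerSeries.coeff_mk, Nat.cast_inj, latCount]
  rw [← Set.coe_ofPred, Nat.card_coe_set_eq]
  congr 1
  ext q
  simp only [Set.mem_ofPred_eq]
  rw [idp']
  have hphi : ∀ m : Fin n → ℕ, phi y m =
      ∑ f : E, m (ε (some f)) • (if f ∈ S then ivec t h f else 0) := by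
    intro m
    unfold phi
    rw [← ε.sum_comp, Fintype.sum_option]
    simp [y, y0]
  have hsum : ∀ m : Fin n → ℕ, ∑ i, m i = m (ε none) + ∑ f : E, m (ε (some f)) := by
    intro m
    rw [← ε.sum_comp, Fintype.sum_option]
  simp only [hphi, hsum]
  constructor
  · rintro ⟨b, h1, h2, h3⟩
    refine ⟨fun i => (ε.symm i).elim (k - ∑ f, b f) b, ?_, ?_⟩
    · simp; omega
    · rw [← h3]
      refine Finset.sum_congr rfl fun f _ => ?_
      by_cases hf : f ∈ S
      · simp [hf]
      · simp [hf, h1 f hf]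
  · rintro ⟨m, h1, h2⟩
    refine ⟨fun f => if f ∈ S then m (ε (some f)) else 0, fun f hf => by simp [hf], ?_, ?_⟩
    · refine le_trans (Finset.sum_le_sum (g := fun f => m (ε (some f))) fun f _ => ?_) (by omega)
      split_ifs <;> omega
    · rw [← h2]
      refine Finset.sum_congr rfl fun f _ => ?_
      by_cases hf : f ∈ S <;> simp [hf]

theorem lat_finite {V E : Type*} [Fintype V] [Fintype E] [DecidableEq V] (t h : E → V) (S : Set E)
    (k : ℕ) : {q : V → ℤ | (fun v => (q v : ℝ)) ∈ (k : ℝ) • rootPolyOn t h S}.Finite := by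
  classical
  refine ((Set.finite_Iic (fun _ : E => k)).image (fun b => ∑ f, b f • ivec t h f)).subset ?_
  intro q hq
  obtain ⟨b, _, h2, h3⟩ := (idp' t h S k q).mp hq
  refine ⟨b, fun f => ?_, h3⟩
  exact (Finset.single_le_sum (f := b) (fun _ _ => Nat.zero_le _) (Finset.mem_univ f)).trans h2

theorem latCount_eq {V E : Type*} [Fintype V] [Fintype E] [DecidableEq V] (t h : E → V) (S : Set E)
    (k : ℕ) : latCount (rootPolyOn t h S) k =
      {q : V → ℤ | (fun v => (q v : ℝ)) ∈ (k : ℝ) • rootPolyOn t h S}.ncard := by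
  rw [latCount, ← Set.coe_ofPred, Nat.card_coe_set_eq]

theorem xe_notMem {V E : Type*} [Fintype E] [DecidableEq V] (t h : E → V) (e : E)
    (hl : t e ≠ h e) (hp : ¬ ∃ f, f ≠ e ∧ t f = t e ∧ h f = h e) :
    xvec t h e ∉ ((1 : ℕ) : ℝ) • rootPolyOn t h {f | f ≠ e} := by
  rw [mem_smul_rootPoly]
  rintro ⟨a, ha, hS, hs, hy⟩
  have h1 := congrFun hy (h e)
  have h2 := congrFun hy (t e)
  simp only [Finset.sum_apply, Pi.smul_apply, smul_eq_mul] at h1 h2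
  have hh : xvec t h e (h e) = 1 := by simp [xvec, hl.symm]
  have ht : xvec t h e (t e) = -1 := by simp [xvec, hl]
  have h3 : (2 : ℝ) = ∑ f, a f * (xvec t h f (h e) - xvec t h f (t e)) := by
    simp only [mul_sub, Finset.sum_sub_distrib]
    rw [← h1, ← h2, hh, ht]; norm_num
  have h4 : ∑ f, a f * (xvec t h f (h e) - xvec t h f (t e)) ≤ ∑ f, a f := by
    refine Finset.sum_le_sum fun f _ => ?_
    by_cases hf : f = e
    · rw [hS f (by simp [hf])]; simp
    · have : xvec t h f (h e) - xvec t h f (t e) ≤ 1 := by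
        have hnp : ¬ (t f = t e ∧ h f = h e) := fun hh => hp ⟨f, hf, hh⟩
        simp only [xvec]
        split_ifs <;> first | (exfalso; grind) | norm_num
      have := ha f
      nlinarith
  push_cast at hs
  linarith

theorem reach_span {V E : Type*} [DecidableEq V] (t h : E → V) (S : Set E) {u v : V}
    (huv : (underlyingOn t h S).Reachable u v) :
    ((fun w => (if w = v then 1 else 0) - (if w = u then 1 else 0)) : V → ℝ) ∈
      Submodule.span ℝ (xvec t h '' S) := by
  obtain ⟨w⟩ := huv
  induction w with
  | nil =>
    convert Submodule.zero_mem _ using 1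
    ext w; simp
  | @cons a b c hadj _ ih =>
    have h1 : ((fun w => (if w = b then 1 else 0) - (if w = a then 1 else 0)) : V → ℝ) ∈
      Submodule.span ℝ (xvec t h '' S) := by
      simp only [underlyingOn, SimpleGraph.fromRel_adj] at hadj
      obtain ⟨_, ⟨f, hf, rfl, rfl⟩ | ⟨f, hf, rfl, rfl⟩⟩ := hadj
      · exact Submodule.subset_span ⟨f, hf, rfl⟩
      · have := Submodule.neg_mem _ (Submodule.subset_span (R := ℝ)
          (Set.mem_image_of_mem (xvec t h) hf))
        convert this using 1
        ext w; simp [xvec]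
    convert Submodule.add_mem _ h1 ih using 1
    ext w; simp

/-- series determined by polynomial -/
theorem hstar_inj {p q : Polynomial ℤ} (hpq : (PowerSeries.mk fun i => p.coeff i) =
    PowerSeries.mk fun i => q.coeff i) : p = q := by
  ext i
  have := congrArg (PowerSeries.coeff i) hpq
  simpa using this

theorem one_sub_X_ne : (1 - PowerSeries.X : PowerSeries ℤ) ≠ 0 := by
  intro h0
  have := congrArg (PowerSeries.coeff 0) h0
  simp at this

theorem pdim_eq {V E : Type*} [DecidableEq V] (t h : E → V) (e : E)
    (hc : (underlyingOn t h {f | f ≠ e}).Connected) :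
    pdim (rootPolyOn t h Set.univ) = pdim (rootPolyOn t h {f | f ≠ e}) := by
  unfold pdim
  rw [vectorSpan_root, vectorSpan_root]
  have : Submodule.span ℝ (xvec t h '' Set.univ) = Submodule.span ℝ (xvec t h '' {f | f ≠ e}) := by
    refine le_antisymm ?_ (Submodule.span_mono (Set.image_mono (Set.subset_univ _)))
    rw [Submodule.span_le]
    rintro _ ⟨f, _, rfl⟩
    by_cases hf : f = e
    · subst hf
      exact reach_span t h _ (hc.preconnected (t f) (h f))
    · exact Submodule.subset_span ⟨f, hf, rfl⟩
  rw [this]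

theorem bridge_not_reach {V E : Type*} (t h : E → V) (e : E)
    (hconn : (underlyingOn t h Set.univ).Connected)
    (hb : ¬(underlyingOn t h {f | f ≠ e}).Connected) :
    ¬ (underlyingOn t h {f | f ≠ e}).Reachable (t e) (h e) := by
  intro hr
  apply hb
  have hadj : ∀ u v, (underlyingOn t h Set.univ).Adj u v →
      (underlyingOn t h {f | f ≠ e}).Reachable u v := by
    intro u v huv
    have hne := huv.ne
    simp only [underlyingOn, SimpleGraph.fromRel_adj] at huv
    obtain ⟨_, ⟨f, _, rfl, rfl⟩ | ⟨f, _, rfl, rfl⟩⟩ := huv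
    · by_cases hf : f = e
      · subst hf; exact hr
      · refine SimpleGraph.Adj.reachable ?_
        simp only [underlyingOn, SimpleGraph.fromRel_adj]
        exact ⟨hne, Or.inl ⟨f, hf, rfl, rfl⟩⟩
    · by_cases hf : f = e
      · subst hf; exact hr.symm
      · refine SimpleGraph.Adj.reachable ?_
        simp only [underlyingOn, SimpleGraph.fromRel_adj]
        exact ⟨hne, Or.inr ⟨f, hf, rfl, rfl⟩⟩
  have := hconn.nonempty
  refine ⟨fun u v => ?_⟩
  obtain ⟨w⟩ := hconn.preconnected u v
  induction w with
  | nil => exact SimpleGraph.Reachable.refl _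
  | cons ha _ ih => exact (hadj _ _ ha).trans ih

theorem bridge_series {V E : Type*} [Fintype V] [Fintype E] [DecidableEq V]
    (t h : E → V) (e : E) (hconn : (underlyingOn t h Set.univ).Connected)
    (hb : ¬(underlyingOn t h {f | f ≠ e}).Connected) :
    (1 - PowerSeries.X) * ehrSeries (rootPolyOn t h Set.univ) =
      ehrSeries (rootPolyOn t h {f | f ≠ e}) ∧
    pdim (rootPolyOn t h Set.univ) = pdim (rootPolyOn t h {f | f ≠ e}) + 1 := by
  classical
  have hnr := bridge_not_reach t h e hconn hb
  let G := underlyingOn t h {f | f ≠ e}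
  let C : Finset V := Finset.univ.filter (fun v => G.Reachable (t e) v)
  have htC : t e ∈ C := by simp [C]
  have hhC : h e ∉ C := by simpa [C] using hnr
  have hC : ∀ f, f ≠ e → (h f ∈ C ↔ t f ∈ C) := by
    intro f hf
    have hr : G.Reachable (t f) (h f) := by
      by_cases hne : t f = h f
      · rw [hne]
      · refine SimpleGraph.Adj.reachable ?_
        simp only [G, underlyingOn, SimpleGraph.fromRel_adj]
        exact ⟨hne, Or.inl ⟨f, hf, rfl, rfl⟩⟩
    simp only [C, Finset.mem_filter, Finset.mem_univ, true_and]
    exact ⟨fun hh => hh.trans hr.symm, fun hh => hh.trans hr⟩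
  have hival : ∀ f, ∑ v ∈ C, ivec t h f v = if f = e then -1 else 0 := by
    intro f
    simp only [ivec, Finset.sum_sub_distrib, Finset.sum_ite_eq']
    by_cases hf : f = e
    · subst hf; simp [htC, hhC]
    · simp [hf, hC f hf]
  have hbval : ∀ b : E → ℕ, ∑ v ∈ C, (∑ f, b f • ivec t h f) v = - (b e : ℤ) := by
    intro b
    simp only [Finset.sum_apply, Pi.smul_apply]
    rw [Finset.sum_comm]
    simp only [← Finset.smul_sum, hival]
    simp
  constructor
  · ext k
    rw [sub_mul, one_mul, map_sub]
    rcases k with _ | k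
    · simp only [ehrSeries, PowerSeries.coeff_mk, PowerSeries.coeff_zero_X_mul, sub_zero,
        Nat.cast_inj, latCount_eq]
      congr 1
      ext q
      simp only [Set.mem_ofPred_eq, idp']
      refine exists_congr fun b => ?_
      constructor
      · rintro ⟨_, h2, h3⟩
        refine ⟨fun f _ => ?_, h2, h3⟩
        have := Finset.single_le_sum (f := b) (fun _ _ => Nat.zero_le _) (Finset.mem_univ f)
        omega
      · rintro ⟨_, h2, h3⟩
        exact ⟨fun f hf => absurd (Set.mem_univ f) hf, h2, h3⟩
    · rw [PowerSeries.coeff_succ_X_mul]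
      simp only [ehrSeries, PowerSeries.coeff_mk, latCount_eq]
      have key : {q : V → ℤ | (fun v => (q v : ℝ)) ∈ ((k+1 : ℕ) : ℝ) • rootPolyOn t h Set.univ} =
          {q : V → ℤ | (fun v => (q v : ℝ)) ∈ ((k+1 : ℕ) : ℝ) • rootPolyOn t h {f | f ≠ e}} ∪
          (fun q => q + ivec t h e) ''
            {q : V → ℤ | (fun v => (q v : ℝ)) ∈ (k : ℝ) • rootPolyOn t h Set.univ} := by
        ext q
        simp only [Set.mem_union, Set.mem_image, Set.mem_ofPred_eq, idp']
        constructor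
        · rintro ⟨b, _, h2, h3⟩
          rcases Nat.eq_zero_or_pos (b e) with h0 | h0
          · left
            refine ⟨b, fun f hf => ?_, h2, h3⟩
            have : f = e := by simpa using hf
            rw [this, h0]
          · right
            obtain ⟨c, hc⟩ : ∃ c : E → ℕ, b = c + Pi.single e 1 := by
              refine ⟨b - Pi.single e 1, ?_⟩
              ext f
              by_cases hf : f = e
              · subst hf; simp; omega
              · simp [hf]
            subst hc
            refine ⟨∑ f, c f • ivec t h f, ⟨c, fun f hf => absurd (Set.mem_univ f) hf, ?_, rfl⟩, ?_⟩
            · simpa [Finset.sum_add_distrib] using h2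
            · rw [← h3]
              simp [add_smul, Finset.sum_add_distrib, Pi.single_apply]
        · rintro (⟨b, _, h2, h3⟩ | ⟨q', ⟨c, _, h2, h3⟩, rfl⟩)
          · exact ⟨b, fun f hf => absurd (Set.mem_univ f) hf, h2, h3⟩
          · refine ⟨c + Pi.single e 1, fun f hf => absurd (Set.mem_univ f) hf, ?_, ?_⟩
            · simpa [Finset.sum_add_distrib] using h2
            · rw [← h3]
              simp [add_smul, Finset.sum_add_distrib, Pi.single_apply]
      rw [key, Set.ncard_union_eq ?_ (lat_finite _ _ _ _) ((lat_finite _ _ _ _).image _),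
        Set.ncard_image_of_injective _ (add_left_injective _)]
      · push_cast; ring
      · rw [Set.disjoint_left]
        rintro q h1 ⟨q', h2, rfl⟩
        obtain ⟨b, hb1, _, hb3⟩ := (idp' _ _ _ _ _).mp h1
        obtain ⟨c, _, _, hc3⟩ := (idp' _ _ _ _ _).mp h2
        have e1 := hbval b
        rw [hb3, hb1 e (by simp)] at e1
        have e2 := hbval c
        rw [hc3] at e2
        simp only [Pi.add_apply, Finset.sum_add_distrib, e2, hival] at e1
        simp at e1
        omega
  · unfold pdim
    rw [vectorSpan_root, vectorSpan_root]
    have himg : xvec t h '' Set.univ = xvec t h '' {f | f ≠ e} ∪ {xvec t h e} := by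
      ext y
      constructor
      · rintro ⟨f, _, rfl⟩
        by_cases hf : f = e
        · right; rw [hf]; rfl
        · left; exact ⟨f, hf, rfl⟩
      · rintro (⟨f, _, rfl⟩ | rfl)
        · exact ⟨f, trivial, rfl⟩
        · exact ⟨e, trivial, rfl⟩
    rw [himg, Submodule.span_union, Submodule.finrank_sup_span_singleton]
    intro hmem
    let l : (V → ℝ) →ₗ[ℝ] ℝ := ∑ v ∈ C, LinearMap.proj v
    have hl : ∀ f, l (xvec t h f) = if f = e then -1 else 0 := by
      intro f
      have := congrArg (Int.cast : ℤ → ℝ) (hival f)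
      push_cast at this
      simp only [ivec_cast] at this
      simpa [l] using this
    have hle : Submodule.span ℝ (xvec t h '' {f | f ≠ e}) ≤ LinearMap.ker l := by
      rw [Submodule.span_le]
      rintro _ ⟨f, hf, rfl⟩
      have hf' : f ≠ e := hf
      simp [hl, hf']
    have := hle hmem
    rw [LinearMap.mem_ker, hl] at this
    simp at this

/-- for a weakly connected digraph `D`, the `h^*`-polynomials of
`Q̃_D` and `Q̃_{D-e}` coincide if and only if `e` is a loop, a bridge, or has a
parallel edge (same tail and head). -/
theorem stmt17 {V E : Type*} [Fintype V] [Fintype E] [DecidableEq V]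
    (t h : E → V) (hconn : (underlyingOn t h Set.univ).Connected) (e : E) :
    (∀ p q : Polynomial ℤ,
      IsHStar (rootPolyOn t h Set.univ) p →
      IsHStar (rootPolyOn t h {f | f ≠ e}) q → p = q) ↔
    (t e = h e ∨ ¬(underlyingOn t h {f | f ≠ e}).Connected ∨
      ∃ f, f ≠ e ∧ t f = t e ∧ h f = h e) := by
  classical
  constructor
  · intro hall
    by_contra hcon
    push Not at hcon
    obtain ⟨hl, hc, hpar⟩ := hcon
    obtain ⟨p, hp⟩ := exists_hstar t h Set.univ
    obtain ⟨q, hq⟩ := exists_hstar t h {f | f ≠ e}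
    have hpq := hall p q hp hq
    subst hpq
    unfold IsHStar at hp hq
    rw [← hq, pdim_eq t h e hc] at hp
    have hser := mul_left_cancel₀ (pow_ne_zero _ one_sub_X_ne) hp
    have h1 := congrArg (PowerSeries.coeff 1) hser
    simp only [ehrSeries, PowerSeries.coeff_mk, Nat.cast_inj, latCount_eq] at h1
    refine absurd h1 (ne_of_gt (Set.ncard_lt_ncard ⟨?_, ?_⟩ (lat_finite _ _ _ _)))
    · intro r hr
      obtain ⟨b, _, hb⟩ := (idp' _ _ _ _ _).mp hr
      exact (idp' _ _ _ _ _).mpr ⟨b, fun f hf => absurd (Set.mem_univ f) hf, hb⟩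
    · intro hsub
      have h2 := hsub (a := ivec t h e) ((idp' _ _ _ _ _).mpr ⟨Pi.single e 1,
        fun f hf => absurd (Set.mem_univ f) hf, by simp, by simp [Pi.single_apply]⟩)
      have h3 : (fun v => ((ivec t h e v : ℤ) : ℝ)) ∈ ((1 : ℕ) : ℝ) • rootPolyOn t h {f | f ≠ e} := h2
      simp only [ivec_cast] at h3
      exact xe_notMem t h e hl (fun ⟨f, h1, h2, h3⟩ => hpar f h1 h2 h3) h3
  · have same : rootPolyOn t h Set.univ = rootPolyOn t h {f | f ≠ e} → ∀ p q : Polynomial ℤ,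
        IsHStar (rootPolyOn t h Set.univ) p →
        IsHStar (rootPolyOn t h {f | f ≠ e}) q → p = q := by
      intro heq p q hp hq
      rw [heq] at hp
      exact hstar_inj (hp.symm.trans hq)
    have same' : xvec t h e ∈ ({0} ∪ (xvec t h '' {f | f ≠ e}) : Set (V → ℝ)) →
        rootPolyOn t h Set.univ = rootPolyOn t h {f | f ≠ e} := by
      intro hx
      unfold rootPolyOn
      congr 1
      refine Set.Subset.antisymm ?_
        (Set.union_subset_union_right _ (Set.image_mono (Set.subset_univ _)))
      rintro y (hy | ⟨f, _, rfl⟩)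
      · exact Or.inl hy
      · by_cases hf : f = e
        · rw [hf]; exact hx
        · exact Or.inr ⟨f, hf, rfl⟩
    rintro (hl | hb | ⟨f, hf, h1, h2⟩)
    · refine same (same' (Or.inl ?_))
      show _ = _
      ext v; simp [xvec, hl]
    · intro p q hp hq
      obtain ⟨hs, hd⟩ := bridge_series t h e hconn hb
      unfold IsHStar at hp hq
      refine hstar_inj ?_
      rw [← hp, ← hq, hd, ← hs, pow_succ]
      ring
    · refine same (same' (Or.inr ⟨f, hf, ?_⟩))
      ext v; simp [xvec, h1, h2]
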